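/- Let (S, A, O, H, ρ0, P, Ω, r) be a finite POMDP that is L-decodable with decoder p* (L ≥ 1). Then there exist a finite set Z with |Z| ≤ |S|·(|O|·|A|)^(L−1) and a map p : X × A → PMF(Z), depending only on the POMDP and the decoder p* (in particular, independent of the policy and of the step h), such that: for every L-step policy π and every step h with L−1 ≤ h ≤ H there is a function w_h^π : Z → ℝ for which Q_h^π(τ_h, a) = r(o_h, a) + Σ_{z∈Z} p(x_h, a)(z)·w_h^π(z) holds for every admissible history τ_h of length h (with L-step window x_h and last observation o_h) and every action a ∈ A. -/

import Mathlib

open Finset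

/-- A probability distribution on a finite type, given by a real-valued mass function. -/
structure FDist (α : Type) [Fintype α] : Type where
  prob : α → ℝ
  nonneg : ∀ a, 0 ≤ prob a
  sum_one : ∑ a, prob a = 1

/-- A finite POMDP `(S, A, O, H, ρ0, P, Ω, r)`: finite state, action and observation spaces,
horizon `H`, initial state distribution `ρ0`, transition kernel `P`, emission kernel `emit`
(denoted Ω in the text), and reward `r`. -/
structure POMDP (S A O : Type) [Fintype S] [Fintype A] [Fintype O] : Type where
  H : ℕ
  ρ0 : FDist S
  P : S → A → FDist S
  emit : S → FDist O
  r : O → A → ℝ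

/-- A history of length `h`: observations `o_0, …, o_h` and actions `a_0, …, a_{h-1}`. -/
abbrev Hist (O A : Type) (h : ℕ) : Type := (Fin (h + 1) → O) × (Fin h → A)

/-- A (history-dependent) policy: at each step `h` and history `τ_h`, a distribution on actions. -/
abbrev Policy (O A : Type) [Fintype A] : Type := (h : ℕ) → Hist O A h → FDist A

/-- The `L`-step window space `X = (O × A)^(L-1) × O`. -/
abbrev Window (O A : Type) (L : ℕ) : Type := (Fin (L - 1) → O × A) × O

section POMDPDefs

variable {S A O : Type} [Fintype S] [Fintype A] [Fintype O]

/-- The history of length `h` read off from a full trajectory of observations and actions. -/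
def Hist.take (H : ℕ) {h : ℕ} (hh : h ≤ H) (o : Fin (H + 1) → O) (a : Fin (H + 1) → A) :
    Hist O A h :=
  (fun i => o (Fin.castLE (by omega) i), fun i => a (Fin.castLE (by omega) i))

/-- The `L`-step window `x_h = (o_{h-L+1}, a_{h-L+1}, …, a_{h-1}, o_h)` of a history of
length `h` (for `L - 1 ≤ h`). -/
def Hist.window (L : ℕ) {h : ℕ} (hL : L - 1 ≤ h) (τ : Hist O A h) : Window O A L :=
  (fun i =>
      (τ.1 ⟨h + 1 - L + i.val, by have := i.isLt; omega⟩,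
       τ.2 ⟨h + 1 - L + i.val, by have := i.isLt; omega⟩),
    τ.1 (Fin.last h))

/-- The history `τ_h` extended by the action `a`, then alternately by the observations
`ω 0, …, ω (k-1)` (playing the roles of `o_{h+1}, …, o_{h+k}`) and the actions
`α 0, …, α (k-2)` (playing the roles of `a_{h+1}, …, a_{h+k-1}`). -/
def Hist.extend {h : ℕ} (τ : Hist O A h) (a : A) {m : ℕ} (ω : Fin m → O) (α : Fin m → A)
    (k : ℕ) (hk : k ≤ m) : Hist O A (h + k) :=
  (fun i =>
      if hi : i.val ≤ h then τ.1 ⟨i.val, by omega⟩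
      else ω ⟨i.val - h - 1, by have := i.isLt; omega⟩,
    fun i =>
      if hi : i.val < h then τ.2 ⟨i.val, by omega⟩
      else if hi' : i.val = h then a
      else α ⟨i.val - h - 1, by have := i.isLt; omega⟩)

/-- The history `τ_h` extended by one action `a` and one observation `o'`. -/
def Hist.snoc {h : ℕ} (τ : Hist O A h) (a : A) (o' : O) : Hist O A (h + 1) :=
  (fun i => if hi : i.val ≤ h then τ.1 ⟨i.val, by omega⟩ else o',
    fun i => if hi : i.val < h then τ.2 ⟨i.val, by omega⟩ else a)

/-- The probability assigned by the trajectory distribution of the policy `π` to the full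
trajectory `(s_0, o_0, a_0, …, s_H, o_H, a_H)`:
`s_0 ∼ ρ0`, `o_t ∼ Ω(s_t)`, `a_t ∼ π_t(τ_t)`, `s_{t+1} ∼ P(s_t, a_t)`. -/
noncomputable def trajProb (M : POMDP S A O) (π : Policy O A)
    (s : Fin (M.H + 1) → S) (o : Fin (M.H + 1) → O) (a : Fin (M.H + 1) → A) : ℝ :=
  M.ρ0.prob (s 0)
    * ∏ t : Fin (M.H + 1), (M.emit (s t)).prob (o t)
    * ∏ t : Fin (M.H + 1),
        (π t.val (Hist.take M.H (Nat.lt_succ_iff.mp t.isLt) o a)).prob (a t)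
    * ∏ t : Fin M.H, (M.P (s t.castSucc) (a t.castSucc)).prob (s t.succ)

variable [DecidableEq S] [DecidableEq A] [DecidableEq O]

/-- The probability that the history at step `h` equals `τ`, under the trajectory
distribution of `π`. -/
noncomputable def histProb (M : POMDP S A O) (π : Policy O A) {h : ℕ} (hh : h ≤ M.H)
    (τ : Hist O A h) : ℝ :=
  ∑ s : Fin (M.H + 1) → S, ∑ o : Fin (M.H + 1) → O, ∑ a : Fin (M.H + 1) → A,
    if Hist.take M.H hh o a = τ then trajProb M π s o a else 0

/-- The probability that the history at step `h` equals `τ` and `s_h = s0`, under the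
trajectory distribution of `π`. -/
noncomputable def stateHistProb (M : POMDP S A O) (π : Policy O A) {h : ℕ} (hh : h ≤ M.H)
    (τ : Hist O A h) (s0 : S) : ℝ :=
  ∑ s : Fin (M.H + 1) → S, ∑ o : Fin (M.H + 1) → O, ∑ a : Fin (M.H + 1) → A,
    if Hist.take M.H hh o a = τ ∧ s ⟨h, by omega⟩ = s0 then trajProb M π s o a else 0

variable [Nonempty A]

/-- The uniform distribution on a finite nonempty type. -/
noncomputable def uniformDist (A : Type) [Fintype A] [Nonempty A] : FDist A where
  prob _ := (Fintype.card A : ℝ)⁻¹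
  nonneg _ := by positivity
  sum_one := by
    have h : (Fintype.card A : ℝ) ≠ 0 := Nat.cast_ne_zero.mpr Fintype.card_ne_zero
    simp [Finset.sum_const, Finset.card_univ, nsmul_eq_mul, h]

/-- The uniformly random policy. -/
noncomputable def uniformPolicy (O A : Type) [Fintype A] [Nonempty A] : Policy O A :=
  fun _ _ => uniformDist A

/-- A history is admissible if it has positive probability under the uniformly random policy. -/
def Admissible (M : POMDP S A O) {h : ℕ} (hh : h ≤ M.H) (τ : Hist O A h) : Prop :=
  0 < histProb M (uniformPolicy O A) hh τ

/-- The belief `b(τ_h)(s)`: the conditional probability of `s_h = s` given that the history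
equals `τ_h`, under the trajectory distribution of the uniformly random policy. -/
noncomputable def belief (M : POMDP S A O) {h : ℕ} (hh : h ≤ M.H) (τ : Hist O A h)
    (s0 : S) : ℝ :=
  stateHistProb M (uniformPolicy O A) hh τ s0 / histProb M (uniformPolicy O A) hh τ

/-- An outcome of the continuation process from step `h` with `m = H - h` remaining steps:
states `s_h, …, s_H`, observations `o_{h+1}, …, o_H` and actions `a_{h+1}, …, a_H`. -/
abbrev ContOutcome (S O A : Type) (m : ℕ) : Type :=
  (Fin (m + 1) → S) × (Fin m → O) × (Fin m → A)

/-- The probability assigned to the outcome `c` by the continuation process from `(τ, a)`: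
`s_h ∼ b(τ)`, `a_h = a`, and for `h < t ≤ H`: `s_t ∼ P(s_{t-1}, a_{t-1})`, `o_t ∼ Ω(s_t)`,
`a_t ∼ π_t(τ_t)` where `τ_t` is `τ` extended by `(a, o_{h+1}, a_{h+1}, …, o_t)`. -/
noncomputable def contProb (M : POMDP S A O) (π : Policy O A) {h : ℕ} (hh : h ≤ M.H)
    (τ : Hist O A h) (a : A) (c : ContOutcome S O A (M.H - h)) : ℝ :=
  belief M hh τ (c.1 0)
    * ∏ t : Fin (M.H - h),
        ((M.P (c.1 t.castSucc)
              (if ht : t.val = 0 then a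
               else c.2.2 ⟨t.val - 1, by have := t.isLt; omega⟩)).prob (c.1 t.succ)
          * (M.emit (c.1 t.succ)).prob (c.2.1 t)
          * (π (h + t.val + 1)
              (Hist.extend τ a c.2.1 c.2.2 (t.val + 1)
                (by have := t.isLt; omega))).prob (c.2.2 t))

/-- The action-value `Q_h^π(τ_h, a)`: the expectation of `Σ_{t=h}^{H} r(o_t, a_t)` under the
continuation process from `(τ_h, a)`. -/
noncomputable def Qval (M : POMDP S A O) (π : Policy O A) {h : ℕ} (hh : h ≤ M.H)
    (τ : Hist O A h) (a : A) : ℝ :=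
  ∑ c : ContOutcome S O A (M.H - h),
    contProb M π hh τ a c *
      (M.r (τ.1 (Fin.last h)) a + ∑ t : Fin (M.H - h), M.r (c.2.1 t) (c.2.2 t))

/-- The value `V_h^π(τ_h) = Σ_a π_h(τ_h)(a) · Q_h^π(τ_h, a)`. -/
noncomputable def Vval (M : POMDP S A O) (π : Policy O A) {h : ℕ} (hh : h ≤ M.H)
    (τ : Hist O A h) : ℝ :=
  ∑ a : A, (π h τ).prob a * Qval M π hh τ a

/-- The POMDP `M` is `L`-decodable with decoder `pstar` if the belief of every admissible
history of length `h` with `L - 1 ≤ h ≤ H` equals `pstar` applied to its `L`-step window. -/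
def IsDecodable (M : POMDP S A O) (L : ℕ) (pstar : Window O A L → FDist S) : Prop :=
  ∀ (h : ℕ) (hh : h ≤ M.H) (hL : L - 1 ≤ h) (τ : Hist O A h),
    Admissible M hh τ → ∀ s : S, belief M hh τ s = (pstar (Hist.window L hL τ)).prob s

/-- `π` is an `L`-step policy: for `L - 1 ≤ h ≤ H`, `π_h(τ_h)` depends on `τ_h` only
through its `L`-step window. -/
def IsLStepPolicy (M : POMDP S A O) (L : ℕ) (π : Policy O A) : Prop :=
  ∀ (h : ℕ), h ≤ M.H → ∀ (hL : L - 1 ≤ h) (τ τ' : Hist O A h),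
    Hist.window L hL τ = Hist.window L hL τ' → π h τ = π h τ'

end POMDPDefs

/-!
The latent variable is the next state together with the next window stripped of its last
observation: `z = (s_{h+1}, (o_{h-L+2}, a_{h-L+2}, …, o_h, a_h))`. By decodability its law given
`(τ_h, a)` is a function `p(x_h, a)` of the window. Conditionally on `z`, the process after step `h`
depends no further on `(τ_h, a)`: the state `s_{h+1}` drives the future observations, and an
`L`-step policy only ever reads the old history through that stripped window. Hence the expected
future reward is the `p(x_h, a)`-average of its conditional expectation `w(z)` given `z`.
-/

theorem sum_prod_take_eq_one {X R : Type*} [Fintype X] [CommSemiring R]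
    (K : ∀ t : ℕ, (Fin (t + 1) → X) → R)
    (hK : ∀ (t : ℕ) (y : Fin t → X), ∑ x, K t (Fin.snoc (α := fun _ => X) y x) = 1) (m : ℕ) :
    ∑ y : Fin m → X, ∏ t : Fin m, K t (Fin.take (t + 1) t.isLt y) = 1 := by
  induction m with
  | zero => simp
  | succ m ih =>
    have take_snoc (y : Fin m → X) (x : X) (t : Fin m) :
        Fin.take (t + 1) (by omega) (Fin.snoc (α := fun _ => X) y x) =
          Fin.take (t + 1) t.isLt y := by
      rw [← Fin.take_init _ t.isLt, Fin.init_snoc]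
    calc ∑ y : Fin (m + 1) → X, ∏ t : Fin (m + 1), K t (Fin.take (t + 1) t.isLt y)
        = ∑ y : Fin m → X, ∑ x, (∏ t : Fin m, K t (Fin.take (t + 1) t.isLt y)) *
            K m (Fin.snoc (α := fun _ => X) y x) := by
          rw [← (Fin.snocEquiv fun _ => X).sum_comp, Fintype.sum_prod_type_right]
          refine sum_congr rfl fun y _ => sum_congr rfl fun x _ => ?_
          rw [Fin.prod_univ_castSucc]
          exact congrArg (· * _) (prod_congr rfl fun t _ => congrArg (K t) (take_snoc y x t))
      _ = 1 := by simp only [← mul_sum, hK, mul_one, ih]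

namespace FDist

variable {α β : Type} [Fintype α] [Fintype β]

/-- The law of a sample from `κ a`, where `a` is sampled from `μ`. -/
def bind (μ : FDist α) (κ : α → FDist β) : FDist β where
  prob b := ∑ a, μ.prob a * (κ a).prob b
  nonneg b := sum_nonneg fun a _ => mul_nonneg (μ.nonneg a) ((κ a).nonneg b)
  sum_one := by
    rw [sum_comm]
    simp only [← mul_sum, sum_one, mul_one]

theorem sum_bind_mul (μ : FDist α) (κ : α → FDist β) (w : β → ℝ) :
    ∑ b, (μ.bind κ).prob b * w b = ∑ a, μ.prob a * ∑ b, (κ a).prob b * w b := by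
  simp only [bind, sum_mul, mul_sum, mul_assoc]
  exact sum_comm

variable [DecidableEq β]

/-- The pushforward of the distribution `μ` along `f`. -/
def map (μ : FDist α) (f : α → β) : FDist β where
  prob b := ∑ a with f a = b, μ.prob a
  nonneg b := sum_nonneg fun a _ => μ.nonneg a
  sum_one := by rw [sum_fiberwise, μ.sum_one]

theorem sum_map_mul (μ : FDist α) (f : α → β) (w : β → ℝ) :
    ∑ b, (μ.map f).prob b * w b = ∑ a, μ.prob a * w (f a) := by
  rw [← sum_fiberwise univ f]
  refine sum_congr rfl fun b _ => ?_
  rw [map, sum_mul]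
  exact sum_congr rfl fun a ha => by rw [(mem_filter.mp ha).2]

end FDist

/-- The part `(o_{h-L+2}, a_{h-L+2}, …, o_h, a_h)` of the window at step `h + 1` that is determined
by the window `x` at step `h` and the action `a`, i.e. all of it but the observation `o_{h+1}`. -/
def Window.shift {O A : Type} (L : ℕ) (x : Window O A L) (a : A) : Fin (L - 1) → O × A :=
  fun i => if hi : i.val + 1 < L - 1 then x.1 ⟨i.val + 1, hi⟩ else (x.2, a)

namespace Hist

variable {O A : Type} {h m : ℕ}

theorem window_snoc (L : ℕ) (hL : L - 1 ≤ h) (τ : Hist O A h) (a : A) (o : O) :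
    (τ.snoc a o).window L (hL.trans h.le_succ) = (Window.shift L (τ.window L hL) a, o) := by
  refine Prod.ext (funext fun i => ?_) (by simp [window, snoc])
  have hi := i.isLt
  by_cases hlast : i.val + 1 < L - 1
  · have hidx : h + 1 + 1 - L + i.val = h + 1 - L + (i.val + 1) := by omega
    have hlt : h + 1 - L + (i.val + 1) < h := by omega
    simp [window, snoc, Window.shift, hidx, hlt, hlt.le, hlast]
  · have hidx : h + 1 + 1 - L + i.val = h := by omega
    simp [window, snoc, Window.shift, hidx, hlast, Fin.last]

theorem extend_one (τ : Hist O A h) (a : A) (ω : Fin (m + 1) → O) (α : Fin (m + 1) → A) :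
    τ.extend a ω α 1 (by omega) = τ.snoc a (ω 0) := by
  refine Prod.ext (funext fun i => ?_) (funext fun i => ?_)
  all_goals
    simp only [extend, snoc]
    grind

theorem extend_add_two (τ : Hist O A h) (a : A) (ω : Fin m → O) (α : Fin m → A) (k : ℕ)
    (hk : k + 2 ≤ m) :
    τ.extend a ω α (k + 2) hk =
      (τ.extend a ω α (k + 1) (by omega)).snoc (α ⟨k, by omega⟩) (ω ⟨k + 1, by omega⟩) := by
  refine Prod.ext (funext fun i => ?_) (funext fun i => ?_)
  all_goals
    simp only [extend, snoc]
    grind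

theorem extend_congr_actions (τ : Hist O A h) (a : A) (ω : Fin m → O) {α α' : Fin m → A} {k : ℕ}
    (hk : k ≤ m) (hα : ∀ i : Fin m, i.val + 1 < k → α i = α' i) :
    τ.extend a ω α k hk = τ.extend a ω α' k hk := by
  refine Prod.ext rfl (funext fun i => ?_)
  simp only [extend]
  split_ifs
  · rfl
  · rfl
  · exact hα _ (by grind)

theorem window_extend_congr (L : ℕ) (hL : L - 1 ≤ h) {τ τ' : Hist O A h} {a a' : A}
    (hshift : Window.shift L (τ.window L hL) a = Window.shift L (τ'.window L hL) a')
    (ω : Fin m → O) (α : Fin m → A) (k : ℕ) (hk : k + 1 ≤ m) :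
    (τ.extend a ω α (k + 1) hk).window L (by omega) =
      (τ'.extend a' ω α (k + 1) hk).window L (by omega) := by
  induction k with
  | zero =>
    obtain ⟨m, rfl⟩ := Nat.exists_eq_add_of_le' hk
    simp only [Nat.reduceAdd, extend_one]
    exact (window_snoc L hL τ a _).trans
      ((congrArg (·, _) hshift).trans (window_snoc L hL τ' a' _).symm)
  | succ k ih =>
    have hLk : L - 1 ≤ h + (k + 1) := by omega
    rw [extend_add_two, extend_add_two]
    exact (window_snoc L hLk _ _ _).trans
      ((congrArg (fun x => (Window.shift L x _, _)) (ih (by omega))).trans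
        (window_snoc L hLk _ _ _).symm)

end Hist

section Continuation

variable {S A O : Type} [Fintype S] [Fintype A] [Fintype O] {h m : ℕ}

/-- Outcomes of the continuation process as an initial state `s_h` followed by the path of triples
`(s_t, o_t, a_t)` for `t > h`. -/
def contOutcomeEquiv (S O A : Type) (m : ℕ) :
    S × (Fin m → S × O × A) ≃ ContOutcome S O A m where
  toFun q := (Fin.cons q.1 fun i => (q.2 i).1, fun i => (q.2 i).2.1, fun i => (q.2 i).2.2)
  invFun c := (c.1 0, fun i => (c.1 i.succ, c.2.1 i, c.2.2 i))
  left_inv _ := rfl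
  right_inv c := Prod.ext (Fin.cons_self_tail c.1) rfl

/-- The probability of the transition into the state `s_{h+t+1}` of the path `y`, which starts from
the state `s` under the action `a`; entry `t` of `y` belongs to step `h + t + 1`. -/
def transitionProb (M : POMDP S A O) (s : S) (a : A) (y : Fin m → S × O × A) (t : Fin m) : ℝ :=
  (M.P (Fin.cons (α := fun _ => S) s (fun i => (y i).1) t.castSucc)
    (Fin.cons (α := fun _ => A) a (fun i => (y i).2.2) t.castSucc)).prob (y t).1

/-- The probability of the observation and the action of step `h + t + 1` of the path `y`, given
the state of that step and the past. -/
def responseProb (M : POMDP S A O) (π : Policy O A) (τ : Hist O A h) (a : A)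
    (y : Fin m → S × O × A) (t : Fin m) : ℝ :=
  (M.emit (y t).1).prob (y t).2.1 *
    (π (h + t + 1) (τ.extend a (fun i => (y i).2.1) (fun i => (y i).2.2) (t + 1) t.isLt)).prob
      (y t).2.2

/-- The total reward `Σ_{t>h} r(o_t, a_t)` collected along a path. -/
def pathReward (M : POMDP S A O) (y : Fin m → S × O × A) : ℝ :=
  ∑ t, M.r (y t).2.1 (y t).2.2

/-- The expected reward collected during the `m` steps after `h`, given `s_h = s` and `a_h = a`. -/
def futureReward (M : POMDP S A O) (π : Policy O A) (τ : Hist O A h) (a : A) (m : ℕ) (s : S) : ℝ :=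
  ∑ y : Fin m → S × O × A,
    (∏ t, transitionProb M s a y t * responseProb M π τ a y t) * pathReward M y

/-- The expected reward collected during the `k + 1` steps after `h`, given that `a_h = a` and
that `s'` is the state at step `h + 1`. -/
def nextStateReward [DecidableEq S] (M : POMDP S A O) (π : Policy O A) (τ : Hist O A h) (a : A)
    (k : ℕ) (s' : S) : ℝ :=
  ∑ y : Fin (k + 1) → S × O × A with (y 0).1 = s',
    (∏ t : Fin k, (M.P (y t.castSucc).1 (y t.castSucc).2.2).prob (y t.succ).1) *
      (∏ t, responseProb M π τ a y t) * pathReward M y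

theorem transitionProb_take (M : POMDP S A O) (s : S) (a : A) (y : Fin m → S × O × A)
    (t : Fin m) :
    transitionProb M s a (Fin.take (t + 1) t.isLt y) (Fin.last t) = transitionProb M s a y t := by
  obtain ⟨_ | t, ht⟩ := t <;> rfl

theorem transitionProb_snoc_last (M : POMDP S A O) (s : S) (a : A) (y : Fin m → S × O × A)
    (x : S × O × A) :
    transitionProb M s a (Fin.snoc (α := fun _ => S × O × A) y x) (Fin.last m) =
      (M.P (Fin.cons (α := fun _ => S) s (fun i => (y i).1) (Fin.last m))
        (Fin.cons (α := fun _ => A) a (fun i => (y i).2.2) (Fin.last m))).prob x.1 := by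
  cases m with
  | zero => rfl
  | succ m =>
    have penultimate : (Fin.last (m + 1)).castSucc = (Fin.last m).castSucc.succ := rfl
    simp only [transitionProb, penultimate, Fin.cons_succ, Fin.snoc_castSucc, Fin.snoc_last]
    rfl

-- The history at step `h + m + 1` does not contain the last action of the path, so on the right
theorem responseProb_snoc_last (M : POMDP S A O) (π : Policy O A) (τ : Hist O A h) (a : A)
    (y : Fin m → S × O × A) (s : S) (o : O) (a' : A) :
    responseProb M π τ a (Fin.snoc (α := fun _ => S × O × A) y (s, o, a')) (Fin.last m) =
      (M.emit s).prob o *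
        (π (h + m + 1) (τ.extend a (Fin.snoc (α := fun _ => O) (fun i => (y i).2.1) o)
          (Fin.snoc (α := fun _ => A) (fun i => (y i).2.2) a) (m + 1) le_rfl)).prob a' := by
  have observations : (fun i => (Fin.snoc (α := fun _ => S × O × A) y (s, o, a') i).2.1) =
      Fin.snoc (α := fun _ => O) (fun i => (y i).2.1) o :=
    Fin.comp_snoc (fun x : S × O × A => x.2.1) y (s, o, a')
  have actions (i : Fin (m + 1)) (hi : i.val + 1 < m + 1) :
      (Fin.snoc (α := fun _ => S × O × A) y (s, o, a') i).2.2 =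
        Fin.snoc (α := fun _ => A) (fun i => (y i).2.2) a i := by
    obtain ⟨j, rfl⟩ : ∃ j : Fin m, j.castSucc = i := ⟨⟨i, by omega⟩, rfl⟩
    simp only [Fin.snoc_castSucc]
  simp only [responseProb, observations, Fin.snoc_last, Fin.val_last,
    τ.extend_congr_actions a _ le_rfl actions]

theorem sum_transitionProb_mul_responseProb_snoc_last (M : POMDP S A O) (π : Policy O A)
    (τ : Hist O A h) (s : S) (a : A) (y : Fin m → S × O × A) :
    ∑ x, transitionProb M s a (Fin.snoc (α := fun _ => S × O × A) y x) (Fin.last m) *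
      responseProb M π τ a (Fin.snoc (α := fun _ => S × O × A) y x) (Fin.last m) = 1 := by
  simp only [Fintype.sum_prod_type, transitionProb_snoc_last, responseProb_snoc_last, ← mul_sum,
    FDist.sum_one, mul_one]

theorem sum_prod_transitionProb_mul_responseProb (M : POMDP S A O) (π : Policy O A)
    (τ : Hist O A h) (s : S) (a : A) (m : ℕ) :
    ∑ y : Fin m → S × O × A, ∏ t, transitionProb M s a y t * responseProb M π τ a y t = 1 := by
  rw [← sum_prod_take_eq_one (fun t y => transitionProb M s a y (Fin.last t) *
    responseProb M π τ a y (Fin.last t))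
    (fun _ y => sum_transitionProb_mul_responseProb_snoc_last M π τ s a y) m]
  simp only [transitionProb_take]
  rfl

theorem futureReward_succ [DecidableEq S] (M : POMDP S A O) (π : Policy O A) (τ : Hist O A h)
    (a : A) (k : ℕ) (s : S) :
    futureReward M π τ a (k + 1) s =
      ∑ s', (M.P s a).prob s' * nextStateReward M π τ a k s' := by
  have transition_zero (y : Fin (k + 1) → S × O × A) :
      transitionProb M s a y 0 = (M.P s a).prob (y 0).1 := rfl
  have transition_succ (y : Fin (k + 1) → S × O × A) (t : Fin k) :
      transitionProb M s a y t.succ =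
        (M.P (y t.castSucc).1 (y t.castSucc).2.2).prob (y t.succ).1 := rfl
  rw [futureReward, ← sum_fiberwise univ fun y => (y 0).1]
  refine sum_congr rfl fun s' _ => ?_
  rw [nextStateReward, mul_sum]
  refine sum_congr rfl fun y hy => ?_
  rw [prod_mul_distrib, Fin.prod_univ_succ, transition_zero, (mem_filter.mp hy).2]
  simp only [transition_succ, mul_assoc]

namespace IsLStepPolicy

variable {M : POMDP S A O} {L : ℕ} {π : Policy O A}

theorem responseProb_congr (hπ : IsLStepPolicy M L π) (hL : L - 1 ≤ h) (hm : h + m ≤ M.H)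
    {τ τ' : Hist O A h} {a a' : A}
    (hshift : Window.shift L (τ.window L hL) a = Window.shift L (τ'.window L hL) a')
    (y : Fin m → S × O × A) (t : Fin m) :
    responseProb M π τ a y t = responseProb M π τ' a' y t := by
  rw [responseProb, responseProb, hπ (h + t + 1) (by omega) (by omega) _ _
    (Hist.window_extend_congr L hL hshift _ _ t t.isLt)]

theorem nextStateReward_congr [DecidableEq S] (hπ : IsLStepPolicy M L π) (hL : L - 1 ≤ h) {k : ℕ}
    (hk : h + (k + 1) ≤ M.H) {τ τ' : Hist O A h} {a a' : A}
    (hshift : Window.shift L (τ.window L hL) a = Window.shift L (τ'.window L hL) a') (s' : S) :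
    nextStateReward M π τ a k s' = nextStateReward M π τ' a' k s' := by
  simp only [nextStateReward, hπ.responseProb_congr hL hk hshift]

theorem exists_futureReward_eq (hπ : IsLStepPolicy M L π) (hL : L - 1 ≤ h) (hm : h + m ≤ M.H) :
    ∃ w : S × (Fin (L - 1) → O × A) → ℝ, ∀ (τ : Hist O A h) (a : A) (s : S),
      futureReward M π τ a m s =
        ∑ s', (M.P s a).prob s' * w (s', Window.shift L (τ.window L hL) a) := by
  classical
  cases m with
  | zero => exact ⟨0, by simp [futureReward, pathReward]⟩
  | succ k =>
    have factors (s' : S) : Function.FactorsThrough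
        (fun q : Hist O A h × A => nextStateReward M π q.1 q.2 k s')
        (fun q => Window.shift L (q.1.window L hL) q.2) :=
      fun _ _ hshift => hπ.nextStateReward_congr hL hm hshift s'
    refine ⟨fun z => Function.extend
      (fun q : Hist O A h × A => Window.shift L (q.1.window L hL) q.2)
      (fun q => nextStateReward M π q.1 q.2 k z.1) 0 z.2, fun τ a s => ?_⟩
    simp only [futureReward_succ, (factors _).extend_apply 0 (τ, a)]

end IsLStepPolicy

variable [DecidableEq S] [DecidableEq A] [DecidableEq O]

theorem contProb_contOutcomeEquiv [Nonempty A] (M : POMDP S A O) (π : Policy O A) (hh : h ≤ M.H)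
    (τ : Hist O A h) (a : A) (s : S) (y : Fin (M.H - h) → S × O × A) :
    contProb M π hh τ a (contOutcomeEquiv S O A _ (s, y)) =
      belief M hh τ s * ∏ t, transitionProb M s a y t * responseProb M π τ a y t := by
  refine congrArg (_ * ·) (prod_congr rfl fun t _ => ?_)
  rw [responseProb, ← mul_assoc]
  obtain ⟨_ | t, ht⟩ := t <;> rfl

theorem Qval_eq_add_sum_belief_mul_futureReward [Nonempty A] (M : POMDP S A O) (π : Policy O A)
    (hh : h ≤ M.H) (τ : Hist O A h) (a : A) (hb : ∑ s, belief M hh τ s = 1) :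
    Qval M π hh τ a = M.r (τ.1 (Fin.last h)) a +
      ∑ s, belief M hh τ s * futureReward M π τ a (M.H - h) s := by
  calc Qval M π hh τ a
      = ∑ s, ∑ y, belief M hh τ s * (∏ t, transitionProb M s a y t * responseProb M π τ a y t) *
          (M.r (τ.1 (Fin.last h)) a + pathReward M y) := by
        rw [Qval, ← (contOutcomeEquiv S O A _).sum_comp, Fintype.sum_prod_type]
        simp only [contProb_contOutcomeEquiv]
        rfl
    _ = ∑ s, (belief M hh τ s * M.r (τ.1 (Fin.last h)) a +
          belief M hh τ s * futureReward M π τ a (M.H - h) s) := by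
        simp only [mul_add, sum_add_distrib, ← sum_mul, ← mul_sum, mul_assoc, futureReward,
          sum_prod_transitionProb_mul_responseProb, one_mul]
    _ = _ := by rw [sum_add_distrib, ← sum_mul, hb, one_mul]

variable {M : POMDP S A O} {L : ℕ} {π : Policy O A}

theorem IsDecodable.sum_belief_eq_one [Nonempty A] {pstar : Window O A L → FDist S}
    (hdec : IsDecodable M L pstar) (hL : L - 1 ≤ h) (hh : h ≤ M.H) {τ : Hist O A h}
    (hτ : Admissible M hh τ) : ∑ s, belief M hh τ s = 1 := by
  simp only [hdec h hh hL τ hτ, FDist.sum_one]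

/-- The representation `p(x, a)`: the joint law of the next state and the (deterministic) shifted
window, when the current state is distributed according to the decoder. -/
def latentDist (M : POMDP S A O) (L : ℕ) (pstar : Window O A L → FDist S) (x : Window O A L)
    (a : A) : FDist (S × (Fin (L - 1) → O × A)) :=
  ((pstar x).bind fun s => M.P s a).map fun s' => (s', Window.shift L x a)

theorem IsDecodable.exists_Qval_eq_add_sum_latentDist [Nonempty A] {pstar : Window O A L → FDist S}
    (hdec : IsDecodable M L pstar) (hπ : IsLStepPolicy M L π) (hL : L - 1 ≤ h) (hh : h ≤ M.H) :
    ∃ w : S × (Fin (L - 1) → O × A) → ℝ,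
      ∀ τ : Hist O A h, Admissible M hh τ → ∀ a : A,
        Qval M π hh τ a = M.r (τ.1 (Fin.last h)) a +
          ∑ z, (latentDist M L pstar (τ.window L hL) a).prob z * w z := by
  obtain ⟨w, hw⟩ := hπ.exists_futureReward_eq hL (m := M.H - h) (by omega)
  refine ⟨w, fun τ hτ a => ?_⟩
  rw [Qval_eq_add_sum_belief_mul_futureReward M π hh τ a (hdec.sum_belief_eq_one hL hh hτ),
    latentDist, FDist.sum_map_mul, FDist.sum_bind_mul]
  simp only [hdec h hh hL τ hτ, hw]

end Continuation

/-- In an `L`-decodable finite POMDP, there is a latent space `Z` with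
`|Z| ≤ |S|·(|O|·|A|)^(L-1)` and a representation `p : X × A → PMF(Z)`, independent of the
policy and the step, such that for every `L`-step policy `π` and every step `h` with
`L-1 ≤ h ≤ H` the action-value function is linear in `p`:
`Q_h^π(τ_h, a) = r(o_h, a) + Σ_z p(x_h, a)(z)·w_h^π(z)`. -/
theorem statement0
    {S A O : Type} [Fintype S] [Fintype A] [Fintype O]
    [Nonempty S] [Nonempty A] [Nonempty O]
    [DecidableEq S] [DecidableEq A] [DecidableEq O]
    (M : POMDP S A O) (L : ℕ) (hL1 : 1 ≤ L)
    (pstar : Window O A L → FDist S)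
    (hdec : IsDecodable M L pstar) :
    ∃ n : ℕ, n ≤ Fintype.card S * (Fintype.card O * Fintype.card A) ^ (L - 1) ∧
      ∃ p : Window O A L → A → FDist (Fin n),
        ∀ π : Policy O A, IsLStepPolicy M L π →
          ∀ (h : ℕ) (hL : L - 1 ≤ h) (hh : h ≤ M.H),
            ∃ w : Fin n → ℝ,
              ∀ τ : Hist O A h, Admissible M hh τ → ∀ a : A,
                Qval M π hh τ a =
                  M.r (τ.1 (Fin.last h)) a +
                    ∑ z : Fin n, (p (Hist.window L hL τ) a).prob z * w z := by
  let e := Fintype.equivFin (S × (Fin (L - 1) → O × A))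
  refine ⟨Fintype.card (S × (Fin (L - 1) → O × A)), by simp,
    fun x a => (latentDist M L pstar x a).map e, fun π hπ h hL hh => ?_⟩
  obtain ⟨w, hw⟩ := hdec.exists_Qval_eq_add_sum_latentDist hπ hL hh
  refine ⟨w ∘ e.symm, fun τ hτ a => ?_⟩
  simp only [hw τ hτ a, FDist.sum_map_mul, Function.comp_apply, e.symm_apply_apply]
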